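/- arXiv:2404.05358 — 2 statements merged into one kernel-verified Lean document; each statement's English description precedes it below -/
import Mathlib

section
/- For all C¹ triples e₁ and e₂ on [0,L], the symmetric part of the L² pairing with J(z) is given by the boundary port variables: (e₁, J(z)e₂) + (J(z)e₁, e₂) = f_B[e₁]|_L·e_B[e₂]|_L + e_B[e₁]|_L·f_B[e₂]|_L + f_B[e₁]|_0·e_B[e₂]|_0 + e_B[e₁]|_0·f_B[e₂]|_0. -/
open MeasureTheory intervalIntegral

/-- The interconnection operator `J(z)` of the port-Hamiltonian formulation of the
compressible non-isothermal Euler equations, acting componentwise on a C¹ triple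
`ψ = (ψ₁, ψ₂, ψ₃)` of functions on `[0,L]`. -/
noncomputable def Jop (lam d : ℝ) (ρ e p v : ℝ → ℝ) (ψ₁ ψ₂ ψ₃ : ℝ → ℝ) :
    (ℝ → ℝ) × (ℝ → ℝ) × (ℝ → ℝ) :=
  (fun x => -(deriv ψ₂ x),
   fun x => -(deriv ψ₁ x) - lam / (2 * d) * v x * |v x| * ψ₃ x
      - e x / ρ x * deriv ψ₃ x - 1 / ρ x * deriv (fun y => p y * ψ₃ y) x,
   fun x => lam / (2 * d) * v x * |v x| * ψ₂ x
      - deriv (fun y => e y / ρ y * ψ₂ y) x - p x * deriv (fun y => 1 / ρ y * ψ₂ y) x)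

/-- The L² pairing `(φ,ψ) = ∫₀ᴸ (φ₁ψ₁ + φ₂ψ₂ + φ₃ψ₃) dx` of two triples of functions. -/
noncomputable def L2pairing (L : ℝ) (φ ψ : (ℝ → ℝ) × (ℝ → ℝ) × (ℝ → ℝ)) : ℝ :=
  ∫ x in (0:ℝ)..L, (φ.1 x * ψ.1 x + φ.2.1 x * ψ.2.1 x + φ.2.2 x * ψ.2.2 x)

/-- Boundary flow at the outflow `x = L`: `f_B[ψ]|_L = −ψ₂(L)`. -/
noncomputable def fB_L (L : ℝ) (ψ₁ ψ₂ ψ₃ : ℝ → ℝ) : ℝ := -ψ₂ L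

/-- Boundary effort at the outflow `x = L`: `e_B[ψ]|_L = ψ₁(L) + ((e+p)/ρ)(L)·ψ₃(L)`. -/
noncomputable def eB_L (ρ e p : ℝ → ℝ) (L : ℝ) (ψ₁ ψ₂ ψ₃ : ℝ → ℝ) : ℝ :=
  ψ₁ L + (e L + p L) / ρ L * ψ₃ L

/-- Boundary flow at the inflow `x = 0`: `f_B[ψ]|_0 = ψ₂(0)`. -/
noncomputable def fB_0 (ψ₁ ψ₂ ψ₃ : ℝ → ℝ) : ℝ := ψ₂ 0

/-- Boundary effort at the inflow `x = 0`: `e_B[ψ]|_0 = ψ₁(0) + ((e+p)/ρ)(0)·ψ₃(0)`. -/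
noncomputable def eB_0 (ρ e p : ℝ → ℝ) (ψ₁ ψ₂ ψ₃ : ℝ → ℝ) : ℝ :=
  ψ₁ 0 + (e 0 + p 0) / ρ 0 * ψ₃ 0

/-!
Up to sign, `φ · J ψ + J φ · ψ` is a sum of exact product-rule derivatives: the friction terms are
skew and cancel pointwise, `(e / ρ) ψ₃'` is paired with `((e / ρ) φ₂)'`, and `(1 / ρ) (p ψ₃)'` with
`p ((1 / ρ) φ₂)'`. Neither the product nor the quotient rule has to be expanded, so integration by
parts applies term by term, and it does so for absolutely continuous states and triples. The
boundary values collect the factor `e / ρ + p / ρ` of the port effort.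
-/

section AbsolutelyContinuous

variable {a b : ℝ}

theorem absolutelyContinuousOnInterval_lipschitzOnWith_comp {X Y : Type*} [PseudoMetricSpace X]
    [PseudoMetricSpace Y] {f : ℝ → X} {g : X → Y} {K : NNReal}
    (hg : LipschitzOnWith K g (f '' Set.uIcc a b)) (hf : AbsolutelyContinuousOnInterval f a b) :
    AbsolutelyContinuousOnInterval (fun x => g (f x)) a b := by
  have hKf := Filter.Tendsto.const_mul (K : ℝ) hf
  rw [mul_zero] at hKf
  refine squeeze_zero' (.of_forall fun E => Finset.sum_nonneg fun _ _ => dist_nonneg) ?_ hKf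
  filter_upwards [Filter.mem_inf_of_right (Filter.mem_principal_self _)] with E hE
  rw [Finset.mul_sum]
  refine Finset.sum_le_sum fun i hi => ?_
  obtain ⟨hleft, hright⟩ := hE.1 i hi
  exact hg.dist_le_mul _ (Set.mem_image_of_mem f hleft) _ (Set.mem_image_of_mem f hright)

theorem absolutelyContinuousOnInterval_contDiffOn_comp {F : Type*} [NormedAddCommGroup F]
    [NormedSpace ℝ F] {f : ℝ → ℝ} {g : ℝ → F} (hg : ContDiffOn ℝ 1 g (f '' Set.uIcc a b))
    (hf : AbsolutelyContinuousOnInterval f a b) :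
    AbsolutelyContinuousOnInterval (fun x => g (f x)) a b := by
  have hcompact : IsCompact (f '' Set.uIcc a b) :=
    isCompact_uIcc.image_of_continuousOn hf.continuousOn
  have hconvex : Convex ℝ (f '' Set.uIcc a b) :=
    (Set.ordConnected_uIcc.isPreconnected.image f hf.continuousOn).ordConnected.convex
  obtain ⟨K, hK⟩ := hg.exists_lipschitzOnWith one_ne_zero hconvex hcompact
  exact absolutelyContinuousOnInterval_lipschitzOnWith_comp hK hf

theorem absolutelyContinuousOnInterval_div {f g : ℝ → ℝ}
    (hf : AbsolutelyContinuousOnInterval f a b) (hg : AbsolutelyContinuousOnInterval g a b)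
    (hg0 : ∀ x ∈ Set.uIcc a b, g x ≠ 0) :
    AbsolutelyContinuousOnInterval (fun x => f x / g x) a b := by
  have hinv : ContDiffOn ℝ 1 (fun y : ℝ => y⁻¹) (g '' Set.uIcc a b) :=
    (contDiffOn_inv ℝ).mono (Set.image_subset_iff.mpr hg0)
  simpa only [div_eq_mul_inv] using
    hf.fun_mul (absolutelyContinuousOnInterval_contDiffOn_comp hinv hg)

theorem absolutelyContinuousOnInterval_one_div {g : ℝ → ℝ}
    (hg : AbsolutelyContinuousOnInterval g a b) (hg0 : ∀ x ∈ Set.uIcc a b, g x ≠ 0) :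
    AbsolutelyContinuousOnInterval (fun x => 1 / g x) a b :=
  absolutelyContinuousOnInterval_div contDiffOn_const.absolutelyContinuousOnInterval hg hg0

theorem intervalIntegrable_deriv_mul_add_mul_deriv {f g : ℝ → ℝ}
    (hf : AbsolutelyContinuousOnInterval f a b) (hg : AbsolutelyContinuousOnInterval g a b) :
    IntervalIntegrable (fun x => deriv f x * g x + f x * deriv g x) volume a b :=
  (hf.intervalIntegrable_deriv.mul_continuousOn hg.continuousOn).add
    (hg.intervalIntegrable_deriv.continuousOn_mul hf.continuousOn)

end AbsolutelyContinuous

/-- The effort variable `ψ₁ + ((e + p) / ρ) ψ₃` as a function on the whole interval; its values at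
`0` and `L` are the boundary efforts. -/
noncomputable def portEffort (ρ e p ψ₁ ψ₃ : ℝ → ℝ) (x : ℝ) : ℝ :=
  ψ₁ x + (e x + p x) / ρ x * ψ₃ x

/-- The derivative of the power flux `φ₂ (ψ₁ + ((e + p) / ρ) ψ₃)`, split into the three product-rule
pairs that occur in the pairing with `J(z)`: `φ₂` with `ψ₁`, `(e / ρ) φ₂` with `ψ₃`, and
`(1 / ρ) φ₂` with `p ψ₃`. -/
noncomputable def powerFluxDeriv (ρ e p φ₂ ψ₁ ψ₃ : ℝ → ℝ) (x : ℝ) : ℝ :=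
  (deriv φ₂ x * ψ₁ x + φ₂ x * deriv ψ₁ x)
    + (deriv (fun y => e y / ρ y * φ₂ y) x * ψ₃ x + e x / ρ x * φ₂ x * deriv ψ₃ x)
    + (deriv (fun y => 1 / ρ y * φ₂ y) x * (p x * ψ₃ x)
      + 1 / ρ x * φ₂ x * deriv (fun y => p y * ψ₃ y) x)

theorem L2pairing_comm (L : ℝ) (φ ψ : (ℝ → ℝ) × (ℝ → ℝ) × (ℝ → ℝ)) :
    L2pairing L φ ψ = L2pairing L ψ φ := by
  simp only [L2pairing, mul_comm]

theorem pairing_Jop_add_pairing_Jop_eq_neg_powerFluxDeriv (lam d : ℝ)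
    (ρ e p v φ₁ φ₂ φ₃ ψ₁ ψ₂ ψ₃ : ℝ → ℝ) (x : ℝ) :
    (φ₁ x * (Jop lam d ρ e p v ψ₁ ψ₂ ψ₃).1 x + φ₂ x * (Jop lam d ρ e p v ψ₁ ψ₂ ψ₃).2.1 x
        + φ₃ x * (Jop lam d ρ e p v ψ₁ ψ₂ ψ₃).2.2 x)
      + (ψ₁ x * (Jop lam d ρ e p v φ₁ φ₂ φ₃).1 x + ψ₂ x * (Jop lam d ρ e p v φ₁ φ₂ φ₃).2.1 x
        + ψ₃ x * (Jop lam d ρ e p v φ₁ φ₂ φ₃).2.2 x)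
      = -(powerFluxDeriv ρ e p φ₂ ψ₁ ψ₃ x + powerFluxDeriv ρ e p ψ₂ φ₁ φ₃ x) := by
  simp only [Jop, powerFluxDeriv]
  ring

section Integration

variable {a b : ℝ} {ρ e p : ℝ → ℝ}

theorem intervalIntegrable_powerFluxDeriv {φ₂ ψ₁ ψ₃ : ℝ → ℝ}
    (hρ : AbsolutelyContinuousOnInterval ρ a b) (he : AbsolutelyContinuousOnInterval e a b)
    (hp : AbsolutelyContinuousOnInterval p a b) (hρ0 : ∀ x ∈ Set.uIcc a b, ρ x ≠ 0)
    (hφ₂ : AbsolutelyContinuousOnInterval φ₂ a b) (hψ₁ : AbsolutelyContinuousOnInterval ψ₁ a b)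
    (hψ₃ : AbsolutelyContinuousOnInterval ψ₃ a b) :
    IntervalIntegrable (powerFluxDeriv ρ e p φ₂ ψ₁ ψ₃) volume a b :=
  ((intervalIntegrable_deriv_mul_add_mul_deriv hφ₂ hψ₁).add
    (intervalIntegrable_deriv_mul_add_mul_deriv
      ((absolutelyContinuousOnInterval_div he hρ hρ0).fun_mul hφ₂) hψ₃)).add
    (intervalIntegrable_deriv_mul_add_mul_deriv
      ((absolutelyContinuousOnInterval_one_div hρ hρ0).fun_mul hφ₂) (hp.fun_mul hψ₃))

theorem integral_powerFluxDeriv {φ₂ ψ₁ ψ₃ : ℝ → ℝ}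
    (hρ : AbsolutelyContinuousOnInterval ρ a b) (he : AbsolutelyContinuousOnInterval e a b)
    (hp : AbsolutelyContinuousOnInterval p a b) (hρ0 : ∀ x ∈ Set.uIcc a b, ρ x ≠ 0)
    (hφ₂ : AbsolutelyContinuousOnInterval φ₂ a b) (hψ₁ : AbsolutelyContinuousOnInterval ψ₁ a b)
    (hψ₃ : AbsolutelyContinuousOnInterval ψ₃ a b) :
    ∫ x in a..b, powerFluxDeriv ρ e p φ₂ ψ₁ ψ₃ x
      = φ₂ b * portEffort ρ e p ψ₁ ψ₃ b - φ₂ a * portEffort ρ e p ψ₁ ψ₃ a := by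
  have heρφ₂ := (absolutelyContinuousOnInterval_div he hρ hρ0).fun_mul hφ₂
  have hρφ₂ := (absolutelyContinuousOnInterval_one_div hρ hρ0).fun_mul hφ₂
  have hpψ₃ := hp.fun_mul hψ₃
  have hint₁ := intervalIntegrable_deriv_mul_add_mul_deriv hφ₂ hψ₁
  have hint₂ := intervalIntegrable_deriv_mul_add_mul_deriv heρφ₂ hψ₃
  have hint₃ := intervalIntegrable_deriv_mul_add_mul_deriv hρφ₂ hpψ₃
  simp only [powerFluxDeriv, portEffort]
  rw [integral_add (hint₁.add hint₂) hint₃, integral_add hint₁ hint₂,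
    hφ₂.integral_deriv_mul_eq_sub hψ₁, heρφ₂.integral_deriv_mul_eq_sub hψ₃,
    hρφ₂.integral_deriv_mul_eq_sub hpψ₃]
  ring

variable {v ψ₁ ψ₂ ψ₃ : ℝ → ℝ}

theorem intervalIntegrable_friction (lam d : ℝ)
    (hv : IntervalIntegrable (fun x => v x * |v x|) volume a b) :
    IntervalIntegrable (fun x => lam / (2 * d) * v x * |v x|) volume a b := by
  simpa only [mul_assoc] using hv.const_mul (lam / (2 * d))

theorem intervalIntegrable_Jop_snd_fst (lam d : ℝ)
    (hρ : AbsolutelyContinuousOnInterval ρ a b) (he : AbsolutelyContinuousOnInterval e a b)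
    (hp : AbsolutelyContinuousOnInterval p a b) (hρ0 : ∀ x ∈ Set.uIcc a b, ρ x ≠ 0)
    (hv : IntervalIntegrable (fun x => v x * |v x|) volume a b)
    (hψ₁ : AbsolutelyContinuousOnInterval ψ₁ a b)
    (hψ₃ : AbsolutelyContinuousOnInterval ψ₃ a b) :
    IntervalIntegrable (Jop lam d ρ e p v ψ₁ ψ₂ ψ₃).2.1 volume a b :=
  ((hψ₁.intervalIntegrable_deriv.neg.sub
    ((intervalIntegrable_friction lam d hv).mul_continuousOn hψ₃.continuousOn)).sub
    (hψ₃.intervalIntegrable_deriv.continuousOn_mul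
      (absolutelyContinuousOnInterval_div he hρ hρ0).continuousOn)).sub
    ((hp.fun_mul hψ₃).intervalIntegrable_deriv.continuousOn_mul
      (absolutelyContinuousOnInterval_one_div hρ hρ0).continuousOn)

theorem intervalIntegrable_Jop_snd_snd (lam d : ℝ)
    (hρ : AbsolutelyContinuousOnInterval ρ a b) (he : AbsolutelyContinuousOnInterval e a b)
    (hp : ContinuousOn p (Set.uIcc a b)) (hρ0 : ∀ x ∈ Set.uIcc a b, ρ x ≠ 0)
    (hv : IntervalIntegrable (fun x => v x * |v x|) volume a b)
    (hψ₂ : AbsolutelyContinuousOnInterval ψ₂ a b) :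
    IntervalIntegrable (Jop lam d ρ e p v ψ₁ ψ₂ ψ₃).2.2 volume a b :=
  (((intervalIntegrable_friction lam d hv).mul_continuousOn hψ₂.continuousOn).sub
    ((absolutelyContinuousOnInterval_div he hρ hρ0).fun_mul hψ₂).intervalIntegrable_deriv).sub
    (((absolutelyContinuousOnInterval_one_div hρ hρ0).fun_mul
      hψ₂).intervalIntegrable_deriv.continuousOn_mul hp)

theorem intervalIntegrable_pairing_Jop (lam d : ℝ) {φ₁ φ₂ φ₃ : ℝ → ℝ}
    (hρ : AbsolutelyContinuousOnInterval ρ a b) (he : AbsolutelyContinuousOnInterval e a b)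
    (hp : AbsolutelyContinuousOnInterval p a b) (hρ0 : ∀ x ∈ Set.uIcc a b, ρ x ≠ 0)
    (hv : IntervalIntegrable (fun x => v x * |v x|) volume a b)
    (hφ₁ : ContinuousOn φ₁ (Set.uIcc a b)) (hφ₂ : ContinuousOn φ₂ (Set.uIcc a b))
    (hφ₃ : ContinuousOn φ₃ (Set.uIcc a b))
    (hψ₁ : AbsolutelyContinuousOnInterval ψ₁ a b) (hψ₂ : AbsolutelyContinuousOnInterval ψ₂ a b)
    (hψ₃ : AbsolutelyContinuousOnInterval ψ₃ a b) :
    IntervalIntegrable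
      (fun x => φ₁ x * (Jop lam d ρ e p v ψ₁ ψ₂ ψ₃).1 x
        + φ₂ x * (Jop lam d ρ e p v ψ₁ ψ₂ ψ₃).2.1 x
        + φ₃ x * (Jop lam d ρ e p v ψ₁ ψ₂ ψ₃).2.2 x) volume a b :=
  ((hψ₂.intervalIntegrable_deriv.neg.continuousOn_mul hφ₁).add
    ((intervalIntegrable_Jop_snd_fst lam d hρ he hp hρ0 hv hψ₁ hψ₃).continuousOn_mul hφ₂)).add
    ((intervalIntegrable_Jop_snd_snd lam d hρ he hp.continuousOn hρ0 hv hψ₂).continuousOn_mul hφ₃)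

end Integration

/-- The derivatives in `Jop` exist here only almost everywhere; on the exceptional null set `deriv`
takes the junk value `0`, which the integrals do not see. -/
theorem Jop_boundary_port_identity_general
    (L lam d : ℝ) (_hd : d ≠ 0)
    (ρ e p : ℝ → ℝ) (hρ : AbsolutelyContinuousOnInterval ρ 0 L)
    (he : AbsolutelyContinuousOnInterval e 0 L) (hp : AbsolutelyContinuousOnInterval p 0 L)
    (hρ0 : ∀ x ∈ Set.uIcc 0 L, ρ x ≠ 0)
    (v : ℝ → ℝ) (hv : IntervalIntegrable (fun x => v x * |v x|) volume 0 L)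
    (φ₁ φ₂ φ₃ ψ₁ ψ₂ ψ₃ : ℝ → ℝ)
    (hφ₁ : AbsolutelyContinuousOnInterval φ₁ 0 L) (hφ₂ : AbsolutelyContinuousOnInterval φ₂ 0 L)
    (hφ₃ : AbsolutelyContinuousOnInterval φ₃ 0 L) (hψ₁ : AbsolutelyContinuousOnInterval ψ₁ 0 L)
    (hψ₂ : AbsolutelyContinuousOnInterval ψ₂ 0 L) (hψ₃ : AbsolutelyContinuousOnInterval ψ₃ 0 L) :
    L2pairing L (φ₁, φ₂, φ₃) (Jop lam d ρ e p v ψ₁ ψ₂ ψ₃)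
      + L2pairing L (Jop lam d ρ e p v φ₁ φ₂ φ₃) (ψ₁, ψ₂, ψ₃)
      = fB_L L φ₁ φ₂ φ₃ * eB_L ρ e p L ψ₁ ψ₂ ψ₃
        + eB_L ρ e p L φ₁ φ₂ φ₃ * fB_L L ψ₁ ψ₂ ψ₃
        + fB_0 φ₁ φ₂ φ₃ * eB_0 ρ e p ψ₁ ψ₂ ψ₃
        + eB_0 ρ e p φ₁ φ₂ φ₃ * fB_0 ψ₁ ψ₂ ψ₃ := by
  have hφJψ := intervalIntegrable_pairing_Jop lam d hρ he hp hρ0 hv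
    hφ₁.continuousOn hφ₂.continuousOn hφ₃.continuousOn hψ₁ hψ₂ hψ₃
  have hψJφ := intervalIntegrable_pairing_Jop lam d hρ he hp hρ0 hv
    hψ₁.continuousOn hψ₂.continuousOn hψ₃.continuousOn hφ₁ hφ₂ hφ₃
  calc
    _ = L2pairing L (φ₁, φ₂, φ₃) (Jop lam d ρ e p v ψ₁ ψ₂ ψ₃)
        + L2pairing L (ψ₁, ψ₂, ψ₃) (Jop lam d ρ e p v φ₁ φ₂ φ₃) := by
      rw [L2pairing_comm L (Jop lam d ρ e p v φ₁ φ₂ φ₃)]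
    _ = ∫ x in 0..L, -(powerFluxDeriv ρ e p φ₂ ψ₁ ψ₃ x + powerFluxDeriv ρ e p ψ₂ φ₁ φ₃ x) := by
      simp only [L2pairing, ← integral_add hφJψ hψJφ,
        pairing_Jop_add_pairing_Jop_eq_neg_powerFluxDeriv]
    _ = -((φ₂ L * portEffort ρ e p ψ₁ ψ₃ L - φ₂ 0 * portEffort ρ e p ψ₁ ψ₃ 0)
        + (ψ₂ L * portEffort ρ e p φ₁ φ₃ L - ψ₂ 0 * portEffort ρ e p φ₁ φ₃ 0)) := by
      rw [intervalIntegral.integral_neg,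
        integral_add (intervalIntegrable_powerFluxDeriv hρ he hp hρ0 hφ₂ hψ₁ hψ₃)
          (intervalIntegrable_powerFluxDeriv hρ he hp hρ0 hψ₂ hφ₁ hφ₃),
        integral_powerFluxDeriv hρ he hp hρ0 hφ₂ hψ₁ hψ₃,
        integral_powerFluxDeriv hρ he hp hρ0 hψ₂ hφ₁ hφ₃]
    _ = _ := by
      simp only [portEffort, fB_L, eB_L, fB_0, eB_0]
      ring

/-- for all C¹ triples `e₁`, `e₂` on `[0,L]`, the symmetric part of the L²
pairing with `J(z)` is given by the boundary port variables. -/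
theorem Jop_boundary_port_identity
    (L lam d : ℝ) (hL : 0 < L) (hd : d ≠ 0)
    (ρ e p : ℝ → ℝ) (hρ : ContDiff ℝ 1 ρ) (he : ContDiff ℝ 1 e) (hp : ContDiff ℝ 1 p)
    (hρ0 : ∀ x ∈ Set.Icc (0:ℝ) L, ρ x ≠ 0)
    (v : ℝ → ℝ) (hv : Continuous v)
    (e₁₁ e₁₂ e₁₃ e₂₁ e₂₂ e₂₃ : ℝ → ℝ)
    (h₁₁ : ContDiff ℝ 1 e₁₁) (h₁₂ : ContDiff ℝ 1 e₁₂) (h₁₃ : ContDiff ℝ 1 e₁₃)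
    (h₂₁ : ContDiff ℝ 1 e₂₁) (h₂₂ : ContDiff ℝ 1 e₂₂) (h₂₃ : ContDiff ℝ 1 e₂₃) :
    L2pairing L (e₁₁, e₁₂, e₁₃) (Jop lam d ρ e p v e₂₁ e₂₂ e₂₃)
      + L2pairing L (Jop lam d ρ e p v e₁₁ e₁₂ e₁₃) (e₂₁, e₂₂, e₂₃)
      = fB_L L e₁₁ e₁₂ e₁₃ * eB_L ρ e p L e₂₁ e₂₂ e₂₃
        + eB_L ρ e p L e₁₁ e₁₂ e₁₃ * fB_L L e₂₁ e₂₂ e₂₃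
        + fB_0 e₁₁ e₁₂ e₁₃ * eB_0 ρ e p e₂₁ e₂₂ e₂₃
        + eB_0 ρ e p e₁₁ e₁₂ e₁₃ * fB_0 e₂₁ e₂₂ e₂₃ := by
  have hac {f : ℝ → ℝ} (hf : ContDiff ℝ 1 f) : AbsolutelyContinuousOnInterval f 0 L :=
    hf.contDiffOn.absolutelyContinuousOnInterval
  exact Jop_boundary_port_identity_general L lam d hd ρ e p (hac hρ) (hac he) (hac hp)
    (Set.uIcc_of_le hL.le ▸ hρ0) v ((hv.mul hv.abs).intervalIntegrable 0 L) e₁₁ e₁₂ e₁₃ e₂₁ e₂₂ e₂₃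
    (hac h₁₁) (hac h₁₂) (hac h₁₃) (hac h₂₁) (hac h₂₂) (hac h₂₃)
end

section
/- (Energy dissipation on a single pipe.) Let ρ, v, e be C¹ on an open neighborhood of [0,t_f] × [0,L] with ρ > 0, set p = (R_s/c_v)·e, T = e/(c_v·ρ), m = ρ·v, E = ρv²/2 + e and h = v²/2 + (e+p)/ρ, and assume the compressible non-isothermal Euler equations ∂_t ρ + ∂_x(ρv) = 0, ∂_t v + ∂_x(v²/2) + (1/ρ)∂_x p + (λ/(2d))|v|v = 0, ∂_t e + ∂_x(e·v) + p·∂_x v − (λ/(2d))ρ|v|v² + (k_ω/d)(T − T_∞) = 0 hold on [0,t_f] × [0,L]. Then the Hamiltonian H(t) = ∫₀ᴸ (ρ(t,x)v(t,x)²/2 + e(t,x)) dx is differentiable in t with H′(t) = m(t,0)·h(t,0) − m(t,L)·h(t,L) − (k_ω/d)·∫₀ᴸ (T(t,x) − T_∞) dx, and if in addition k_ω ≥ 0, d > 0 and T(t,x) ≥ 0, then H′(t) ≤ ∫₀ᴸ (k_ω/d)·T_∞ dx + m(t,0)·h(t,0) − m(t,L)·h(t,L), i.e. the energy dissipation inequality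 d/dt H ≤ (f_P, e_P) + f_B·e_B holds with external port (f_P, e_P) = (k_ω/d, T_∞) and boundary port pairing f_B·e_B = m(t,0)h(t,0) − m(t,L)h(t,L). -/
open MeasureTheory intervalIntegral Set

/-- Partial derivative with respect to the time variable. -/
noncomputable def pderivT (f : ℝ × ℝ → ℝ) (t x : ℝ) : ℝ := deriv (fun τ => f (τ, x)) t

/-- Partial derivative with respect to the space variable. -/
noncomputable def pderivX (f : ℝ × ℝ → ℝ) (t x : ℝ) : ℝ := deriv (fun y => f (t, y)) x

/-!
Multiplying the mass balance by `v² / 2` and the velocity equation by `ρ v` gives a balance for the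
kinetic energy, in which friction appears as the loss `ρ f v` and the pressure as `-v ∂ₓp`. The
internal energy equation gains the same two terms with opposite sign, so they cancel in the sum: the
total energy obeys a balance law whose flux is mass flux times specific enthalpy and whose only
source is the heat exchange. Integrating over the pipe turns the flux into its boundary values.
-/

section ParametricIntegral

theorem intervalIntegrable_slice {X E : Type*} [TopologicalSpace X] [NormedAddCommGroup E]
    {F : X × ℝ → E} {U : Set (X × ℝ)} {t : X} {a b : ℝ} (hF : ContinuousOn F U)
    (hslice : ∀ x ∈ uIcc a b, (t, x) ∈ U) :
    IntervalIntegrable (fun x => F (t, x)) volume a b :=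
  (hF.comp (by fun_prop) hslice).intervalIntegrable

theorem exists_closedBall_prod_subset {X Y : Type*} [PseudoMetricSpace X] [TopologicalSpace Y]
    {U : Set (X × Y)} {K : Set Y} {t : X} (hU : IsOpen U) (hK : IsCompact K)
    (hslice : ∀ y ∈ K, (t, y) ∈ U) :
    ∃ δ > 0, Metric.closedBall t δ ×ˢ K ⊆ U := by
  have near_slice : ∀ᶠ τ in nhds t, ∀ y ∈ K, (τ, y) ∈ U :=
    hK.eventually_forall_of_forall_eventually fun y hy => hU.mem_nhds (hslice y hy)
  obtain ⟨δ, hδ, hball⟩ := Metric.nhds_basis_closedBall.eventually_iff.1 near_slice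
  exact ⟨δ, hδ, fun q hq => hball hq.1 q.2 hq.2⟩

theorem hasDerivAt_intervalIntegral_of_continuousOn {𝕜 E : Type*} [RCLike 𝕜]
    [NormedAddCommGroup E] [NormedSpace ℝ E] [NormedSpace 𝕜 E] {F F' : 𝕜 × ℝ → E}
    {U : Set (𝕜 × ℝ)} {t : 𝕜} {a b : ℝ} (hU : IsOpen U) (hslice : ∀ x ∈ uIcc a b, (t, x) ∈ U)
    (hF : ContinuousOn F U) (hF' : ContinuousOn F' U)
    (hderiv : ∀ q ∈ U, HasDerivAt (fun τ => F (τ, q.2)) (F' q) q.1) :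
    HasDerivAt (fun τ => ∫ x in a..b, F (τ, x)) (∫ x in a..b, F' (t, x)) t := by
  obtain ⟨δ, hδ, hsub⟩ := exists_closedBall_prod_subset hU isCompact_uIcc hslice
  obtain ⟨C, hC⟩ := ((isCompact_closedBall t δ).prod isCompact_uIcc).exists_bound_of_continuousOn
    (hF'.mono hsub)
  have hnhds := Metric.closedBall_mem_nhds t hδ
  refine (hasDerivAt_integral_of_dominated_loc_of_deriv_le (F := fun τ x => F (τ, x))
    (F' := fun τ x => F' (τ, x)) (bound := fun _ => C) hnhds ?_
    (intervalIntegrable_slice hF hslice)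
    (intervalIntegrable_slice hF' hslice).aestronglyMeasurable_restrict_uIoc
    (.of_forall fun x hx τ hτ => hC (τ, x) ⟨hτ, uIoc_subset_uIcc hx⟩) intervalIntegrable_const
    (.of_forall fun x hx τ hτ => hderiv (τ, x) (hsub ⟨hτ, uIoc_subset_uIcc hx⟩))).2
  filter_upwards [hnhds] with τ hτ
  exact (intervalIntegrable_slice hF fun x hx =>
    hsub ⟨hτ, hx⟩).aestronglyMeasurable_restrict_uIoc

end ParametricIntegral

section ContDiffOn

variable {𝕜 E F : Type*} [NontriviallyNormedField 𝕜] [NormedAddCommGroup E] [NormedSpace 𝕜 E]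
  [NormedAddCommGroup F] [NormedSpace 𝕜 F] {f : E → F} {U : Set E}

theorem differentiableAt_of_contDiffOn_one (hU : IsOpen U) (hf : ContDiffOn 𝕜 1 f U)
    {z : E} (hz : z ∈ U) : DifferentiableAt 𝕜 f z :=
  (hf.differentiableOn one_ne_zero).differentiableAt (hU.mem_nhds hz)

theorem continuousOn_fderiv_apply (hU : IsOpen U) (hf : ContDiffOn 𝕜 1 f U) (w : E) :
    ContinuousOn (fun z => fderiv 𝕜 f z w) U :=
  (hf.continuousOn_fderiv_of_isOpen hU le_rfl).clm_apply continuousOn_const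

end ContDiffOn

section PartialDerivatives

variable {f g : ℝ × ℝ → ℝ} {U : Set (ℝ × ℝ)} {t x : ℝ}

theorem hasDerivAt_pderivT (hf : DifferentiableAt ℝ f (t, x)) :
    HasDerivAt (fun τ => f (τ, x)) (pderivT f t x) t :=
  (hf.comp t (f := fun τ => (τ, x)) (by fun_prop)).hasDerivAt

theorem hasDerivAt_pderivX (hf : DifferentiableAt ℝ f (t, x)) :
    HasDerivAt (fun y => f (t, y)) (pderivX f t x) x :=
  (hf.comp x (f := fun y => (t, y)) (by fun_prop)).hasDerivAt

theorem pderivT_eq_fderiv (hf : DifferentiableAt ℝ f (t, x)) :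
    pderivT f t x = fderiv ℝ f (t, x) (1, 0) :=
  (hf.hasFDerivAt.comp_hasDerivAt t ((hasDerivAt_id t).prodMk (hasDerivAt_const t x))).deriv

theorem pderivX_eq_fderiv (hf : DifferentiableAt ℝ f (t, x)) :
    pderivX f t x = fderiv ℝ f (t, x) (0, 1) :=
  (hf.hasFDerivAt.comp_hasDerivAt x ((hasDerivAt_const x t).prodMk (hasDerivAt_id x))).deriv

theorem continuousOn_pderivT (hU : IsOpen U) (hf : ContDiffOn ℝ 1 f U) :
    ContinuousOn (fun q => pderivT f q.1 q.2) U :=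
  (continuousOn_fderiv_apply hU hf (1, 0)).congr fun _ hq =>
    pderivT_eq_fderiv (differentiableAt_of_contDiffOn_one hU hf hq)

theorem continuousOn_pderivX (hU : IsOpen U) (hf : ContDiffOn ℝ 1 f U) :
    ContinuousOn (fun q => pderivX f q.1 q.2) U :=
  (continuousOn_fderiv_apply hU hf (0, 1)).congr fun _ hq =>
    pderivX_eq_fderiv (differentiableAt_of_contDiffOn_one hU hf hq)

theorem pderivT_add (hf : DifferentiableAt ℝ f (t, x)) (hg : DifferentiableAt ℝ g (t, x)) :
    pderivT (fun q => f q + g q) t x = pderivT f t x + pderivT g t x :=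
  ((hasDerivAt_pderivT hf).add (hasDerivAt_pderivT hg)).deriv

theorem pderivX_add (hf : DifferentiableAt ℝ f (t, x)) (hg : DifferentiableAt ℝ g (t, x)) :
    pderivX (fun q => f q + g q) t x = pderivX f t x + pderivX g t x :=
  ((hasDerivAt_pderivX hf).add (hasDerivAt_pderivX hg)).deriv

theorem pderivT_mul (hf : DifferentiableAt ℝ f (t, x)) (hg : DifferentiableAt ℝ g (t, x)) :
    pderivT (fun q => f q * g q) t x = pderivT f t x * g (t, x) + f (t, x) * pderivT g t x :=
  ((hasDerivAt_pderivT hf).mul (hasDerivAt_pderivT hg)).deriv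

theorem pderivX_mul (hf : DifferentiableAt ℝ f (t, x)) (hg : DifferentiableAt ℝ g (t, x)) :
    pderivX (fun q => f q * g q) t x = pderivX f t x * g (t, x) + f (t, x) * pderivX g t x :=
  ((hasDerivAt_pderivX hf).mul (hasDerivAt_pderivX hg)).deriv

theorem pderivT_sq_div_two (hf : DifferentiableAt ℝ f (t, x)) :
    pderivT (fun q => f q ^ 2 / 2) t x = f (t, x) * pderivT f t x := by
  have hderiv := ((hasDerivAt_pderivT hf).fun_pow 2).div_const 2
  rw [pderivT, hderiv.deriv]
  push_cast
  ring

end PartialDerivatives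

section BalanceLaw

variable {f : ℝ × ℝ → ℝ} {U : Set (ℝ × ℝ)} {t a b : ℝ}

theorem hasDerivAt_integral_pderivT (hU : IsOpen U) (hf : ContDiffOn ℝ 1 f U)
    (hslice : ∀ x ∈ uIcc a b, (t, x) ∈ U) :
    HasDerivAt (fun τ => ∫ x in a..b, f (τ, x)) (∫ x in a..b, pderivT f t x) t :=
  hasDerivAt_intervalIntegral_of_continuousOn hU hslice hf.continuousOn
    (continuousOn_pderivT hU hf) fun _ hq =>
      hasDerivAt_pderivT (differentiableAt_of_contDiffOn_one hU hf hq)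

theorem integral_pderivX (hU : IsOpen U) (hf : ContDiffOn ℝ 1 f U)
    (hslice : ∀ x ∈ uIcc a b, (t, x) ∈ U) :
    ∫ x in a..b, pderivX f t x = f (t, b) - f (t, a) :=
  integral_eq_sub_of_hasDerivAt
    (fun x hx => hasDerivAt_pderivX (differentiableAt_of_contDiffOn_one hU hf (hslice x hx)))
    (intervalIntegrable_slice (continuousOn_pderivX hU hf) hslice)

theorem hasDerivAt_integral_of_balance_law {density flux : ℝ × ℝ → ℝ} {source : ℝ → ℝ}
    (hU : IsOpen U) (hslice : ∀ x ∈ uIcc a b, (t, x) ∈ U)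
    (hdensity : ContDiffOn ℝ 1 density U) (hflux : ContDiffOn ℝ 1 flux U)
    (hbalance : ∀ x ∈ uIcc a b, pderivT density t x + pderivX flux t x = source x) :
    HasDerivAt (fun τ => ∫ x in a..b, density (τ, x))
      (flux (t, a) - flux (t, b) + ∫ x in a..b, source x) t := by
  have hsource : ∫ x in a..b, source x
      = (∫ x in a..b, pderivT density t x) + (flux (t, b) - flux (t, a)) := by
    rw [← integral_congr hbalance,
      integral_add (intervalIntegrable_slice (continuousOn_pderivT hU hdensity) hslice)
        (intervalIntegrable_slice (continuousOn_pderivX hU hflux) hslice),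
      integral_pderivX hU hflux hslice]
  convert hasDerivAt_integral_pderivT hU hdensity hslice using 1
  linarith

theorem neg_mul_integral_sub_const_le {g : ℝ → ℝ} {k c : ℝ} (hab : a ≤ b) (hk : 0 ≤ k)
    (hg : IntervalIntegrable g volume a b) (hg_nonneg : ∀ x ∈ Icc a b, 0 ≤ g x) :
    -(k * ∫ x in a..b, (g x - c)) ≤ ∫ _ in a..b, k * c := by
  have hloss : 0 ≤ k * ∫ x in a..b, g x := mul_nonneg hk (integral_nonneg hab hg_nonneg)
  rw [integral_sub hg intervalIntegrable_const, intervalIntegral.integral_const_mul]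
  linarith

end BalanceLaw

section Euler

/-- The compressible Euler equations at the point `(t, x)` for density `ρ`, velocity `v`, internal
energy `e` and pressure `p`. The number `f` is the friction force per unit mass at this point and
`q` the heat lost to the surroundings per unit volume; no constitutive law is imposed on `p`, `f`
and `q`. -/
structure EulerEquationsAt (ρ v e p : ℝ × ℝ → ℝ) (f q t x : ℝ) : Prop where
  mass : pderivT ρ t x + pderivX (fun z => ρ z * v z) t x = 0
  velocity : pderivT v t x + pderivX (fun z => v z ^ 2 / 2) t x
    + 1 / ρ (t, x) * pderivX p t x + f = 0
  internalEnergy : pderivT e t x + pderivX (fun z => e z * v z) t x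
    + p (t, x) * pderivX v t x - ρ (t, x) * f * v (t, x) + q = 0

/-- Total energy per unit volume: the density of the Hamiltonian. -/
noncomputable def energyDensity (ρ v e : ℝ × ℝ → ℝ) (z : ℝ × ℝ) : ℝ :=
  ρ z * v z ^ 2 / 2 + e z

/-- Total specific enthalpy `h`. -/
noncomputable def specificEnthalpy (ρ v e p : ℝ × ℝ → ℝ) (z : ℝ × ℝ) : ℝ :=
  v z ^ 2 / 2 + (e z + p z) / ρ z

/-- Flux of total energy: transported kinetic and internal energy plus the power of the pressure.
It equals mass flux times `specificEnthalpy`; written without division it is as smooth as its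
arguments whether or not `ρ` vanishes. -/
noncomputable def energyFlux (ρ v e p : ℝ × ℝ → ℝ) (z : ℝ × ℝ) : ℝ :=
  ρ z * v z * (v z ^ 2 / 2) + (e z * v z + p z * v z)

variable {ρ v e p : ℝ × ℝ → ℝ} {U : Set (ℝ × ℝ)} {f q t x : ℝ}

theorem energyFlux_eq_mul_specificEnthalpy {z : ℝ × ℝ} (hρ : ρ z ≠ 0) :
    energyFlux ρ v e p z = ρ z * v z * specificEnthalpy ρ v e p z := by
  unfold energyFlux specificEnthalpy
  field_simp

theorem contDiffOn_energyDensity (hρ : ContDiffOn ℝ 1 ρ U) (hv : ContDiffOn ℝ 1 v U)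
    (he : ContDiffOn ℝ 1 e U) : ContDiffOn ℝ 1 (energyDensity ρ v e) U :=
  ((hρ.mul (hv.pow 2)).div_const 2).add he

theorem contDiffOn_energyFlux (hρ : ContDiffOn ℝ 1 ρ U) (hv : ContDiffOn ℝ 1 v U)
    (he : ContDiffOn ℝ 1 e U) (hp : ContDiffOn ℝ 1 p U) :
    ContDiffOn ℝ 1 (energyFlux ρ v e p) U :=
  ((hρ.mul hv).mul ((hv.pow 2).div_const 2)).add ((he.mul hv).add (hp.mul hv))

theorem kineticEnergy_balance (hρ : DifferentiableAt ℝ ρ (t, x))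
    (hv : DifferentiableAt ℝ v (t, x)) (hρ_ne : ρ (t, x) ≠ 0)
    (mass : pderivT ρ t x + pderivX (fun z => ρ z * v z) t x = 0)
    (velocity : pderivT v t x + pderivX (fun z => v z ^ 2 / 2) t x
      + 1 / ρ (t, x) * pderivX p t x + f = 0) :
    pderivT (fun z => ρ z * (v z ^ 2 / 2)) t x + pderivX (fun z => ρ z * v z * (v z ^ 2 / 2)) t x
      = -(v (t, x) * pderivX p t x) - ρ (t, x) * f * v (t, x) := by
  have hK : DifferentiableAt ℝ (fun z => v z ^ 2 / 2) (t, x) := by fun_prop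
  have hpressure : ρ (t, x) * (1 / ρ (t, x)) = 1 := mul_one_div_cancel hρ_ne
  rw [pderivT_mul hρ hK, pderivX_mul (hρ.fun_mul hv) hK, pderivT_sq_div_two hv]
  linear_combination v (t, x) ^ 2 / 2 * mass + ρ (t, x) * v (t, x) * velocity
    - v (t, x) * pderivX p t x * hpressure

theorem internalEnergy_balance (hv : DifferentiableAt ℝ v (t, x))
    (hp : DifferentiableAt ℝ p (t, x))
    (internalEnergy : pderivT e t x + pderivX (fun z => e z * v z) t x
      + p (t, x) * pderivX v t x - ρ (t, x) * f * v (t, x) + q = 0) :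
    pderivT e t x + (pderivX (fun z => e z * v z) t x + pderivX (fun z => p z * v z) t x)
      = v (t, x) * pderivX p t x + ρ (t, x) * f * v (t, x) - q := by
  rw [pderivX_mul hp hv]
  linear_combination internalEnergy

theorem energy_balance (hρ : DifferentiableAt ℝ ρ (t, x)) (hv : DifferentiableAt ℝ v (t, x))
    (he : DifferentiableAt ℝ e (t, x)) (hp : DifferentiableAt ℝ p (t, x)) (hρ_ne : ρ (t, x) ≠ 0)
    (euler : EulerEquationsAt ρ v e p f q t x) :
    pderivT (energyDensity ρ v e) t x + pderivX (energyFlux ρ v e p) t x = -q := by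
  have hdensity : pderivT (energyDensity ρ v e) t x
      = pderivT (fun z => ρ z * (v z ^ 2 / 2)) t x + pderivT e t x := by
    rw [← pderivT_add (by fun_prop) he]
    simp only [energyDensity, pderivT, mul_div_assoc]
  have hflux : pderivX (energyFlux ρ v e p) t x
      = pderivX (fun z => ρ z * v z * (v z ^ 2 / 2)) t x
        + (pderivX (fun z => e z * v z) t x + pderivX (fun z => p z * v z) t x) := by
    rw [← pderivX_add (he.fun_mul hv) (hp.fun_mul hv), ← pderivX_add (by fun_prop) (by fun_prop)]
    rfl
  linear_combination hdensity + hflux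
    + kineticEnergy_balance hρ hv hρ_ne euler.mass euler.velocity
    + internalEnergy_balance hv hp euler.internalEnergy

theorem hasDerivAt_integral_energyDensity {a b : ℝ} {friction heatLoss : ℝ → ℝ}
    (hU : IsOpen U) (hslice : ∀ x ∈ uIcc a b, (t, x) ∈ U)
    (hρ : ContDiffOn ℝ 1 ρ U) (hv : ContDiffOn ℝ 1 v U) (he : ContDiffOn ℝ 1 e U)
    (hp : ContDiffOn ℝ 1 p U) (hρ_ne : ∀ x ∈ uIcc a b, ρ (t, x) ≠ 0)
    (euler : ∀ x ∈ uIcc a b, EulerEquationsAt ρ v e p (friction x) (heatLoss x) t x) :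
    HasDerivAt (fun τ => ∫ x in a..b, energyDensity ρ v e (τ, x))
      (ρ (t, a) * v (t, a) * specificEnthalpy ρ v e p (t, a)
        - ρ (t, b) * v (t, b) * specificEnthalpy ρ v e p (t, b)
        - ∫ x in a..b, heatLoss x) t := by
  have hdiff {g : ℝ × ℝ → ℝ} (hg : ContDiffOn ℝ 1 g U) {x : ℝ} (hx : x ∈ uIcc a b) :
      DifferentiableAt ℝ g (t, x) := differentiableAt_of_contDiffOn_one hU hg (hslice x hx)
  have hbalance : ∀ x ∈ uIcc a b,
      pderivT (energyDensity ρ v e) t x + pderivX (energyFlux ρ v e p) t x = -heatLoss x :=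
    fun x hx => energy_balance (hdiff hρ hx) (hdiff hv hx) (hdiff he hx) (hdiff hp hx)
      (hρ_ne x hx) (euler x hx)
  rw [← energyFlux_eq_mul_specificEnthalpy (hρ_ne a left_mem_uIcc),
    ← energyFlux_eq_mul_specificEnthalpy (hρ_ne b right_mem_uIcc),
    sub_eq_add_neg _ (∫ _ in a..b, _), ← intervalIntegral.integral_neg]
  exact hasDerivAt_integral_of_balance_law hU hslice (contDiffOn_energyDensity hρ hv he)
    (contDiffOn_energyFlux hρ hv he hp) hbalance

end Euler

/-- energy dissipation on a single pipe: for C¹ solutions of the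
compressible non-isothermal Euler equations on `[0,t_f] × [0,L]` (with `ρ > 0`,
`p = (R_s/c_v)e`, `T = e/(c_v ρ)`, `m = ρv`, `h = v²/2 + (e+p)/ρ`), the Hamiltonian
`H(t) = ∫₀ᴸ (ρv²/2 + e) dx` is differentiable with
`H′(t) = m(t,0)h(t,0) − m(t,L)h(t,L) − (k_ω/d)∫₀ᴸ(T − T_∞) dx`, and if moreover
`k_ω ≥ 0`, `d > 0` and `T ≥ 0`, then
`H′(t) ≤ ∫₀ᴸ (k_ω/d)T_∞ dx + m(t,0)h(t,0) − m(t,L)h(t,L)`. -/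
theorem pipe_energy_dissipation
    (L tf Rs cv lam kω d Tinf : ℝ)
    (hL : 0 < L) (htf : 0 < tf) (hRs : 0 < Rs) (hcv : 0 < cv) (hd : d ≠ 0)
    (ρ v e : ℝ × ℝ → ℝ)
    (U : Set (ℝ × ℝ)) (hU : IsOpen U)
    (hUsub : Icc (0:ℝ) tf ×ˢ Icc (0:ℝ) L ⊆ U)
    (hρ : ContDiffOn ℝ 1 ρ U) (hv : ContDiffOn ℝ 1 v U) (he : ContDiffOn ℝ 1 e U)
    (hρpos : ∀ q ∈ U, 0 < ρ q)
    -- mass balance: ∂_t ρ + ∂_x(ρv) = 0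
    (h1 : ∀ t ∈ Icc (0:ℝ) tf, ∀ x ∈ Icc (0:ℝ) L,
      pderivT ρ t x + pderivX (fun q => ρ q * v q) t x = 0)
    -- velocity equation: ∂_t v + ∂_x(v²/2) + (1/ρ)∂_x p + (λ/(2d))|v|v = 0
    (h2 : ∀ t ∈ Icc (0:ℝ) tf, ∀ x ∈ Icc (0:ℝ) L,
      pderivT v t x + pderivX (fun q => v q ^ 2 / 2) t x
        + 1 / ρ (t, x) * pderivX (fun q => Rs / cv * e q) t x
        + lam / (2 * d) * |v (t, x)| * v (t, x) = 0)
    -- internal energy equation: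
    -- ∂_t e + ∂_x(e v) + p ∂_x v − (λ/(2d))ρ|v|v² + (k_ω/d)(T − T_∞) = 0
    (h3 : ∀ t ∈ Icc (0:ℝ) tf, ∀ x ∈ Icc (0:ℝ) L,
      pderivT e t x + pderivX (fun q => e q * v q) t x
        + Rs / cv * e (t, x) * pderivX v t x
        - lam / (2 * d) * ρ (t, x) * |v (t, x)| * v (t, x) ^ 2
        + kω / d * (e (t, x) / (cv * ρ (t, x)) - Tinf) = 0) :
    ∀ t ∈ Icc (0:ℝ) tf,
      HasDerivAt (fun τ => ∫ x in (0:ℝ)..L, (ρ (τ, x) * v (τ, x) ^ 2 / 2 + e (τ, x)))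
        (ρ (t, 0) * v (t, 0)
            * (v (t, 0) ^ 2 / 2 + (e (t, 0) + Rs / cv * e (t, 0)) / ρ (t, 0))
          - ρ (t, L) * v (t, L)
            * (v (t, L) ^ 2 / 2 + (e (t, L) + Rs / cv * e (t, L)) / ρ (t, L))
          - kω / d * ∫ x in (0:ℝ)..L, (e (t, x) / (cv * ρ (t, x)) - Tinf)) t
      ∧ (0 ≤ kω → 0 < d →
          (∀ t' ∈ Icc (0:ℝ) tf, ∀ x ∈ Icc (0:ℝ) L, 0 ≤ e (t', x) / (cv * ρ (t', x))) →
          ρ (t, 0) * v (t, 0)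
              * (v (t, 0) ^ 2 / 2 + (e (t, 0) + Rs / cv * e (t, 0)) / ρ (t, 0))
            - ρ (t, L) * v (t, L)
              * (v (t, L) ^ 2 / 2 + (e (t, L) + Rs / cv * e (t, L)) / ρ (t, L))
            - kω / d * (∫ x in (0:ℝ)..L, (e (t, x) / (cv * ρ (t, x)) - Tinf))
          ≤ (∫ x in (0:ℝ)..L, kω / d * Tinf)
            + ρ (t, 0) * v (t, 0)
                * (v (t, 0) ^ 2 / 2 + (e (t, 0) + Rs / cv * e (t, 0)) / ρ (t, 0))
            - ρ (t, L) * v (t, L)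
                * (v (t, L) ^ 2 / 2 + (e (t, L) + Rs / cv * e (t, L)) / ρ (t, L))) := by
  intro t ht
  have hslice : ∀ x ∈ uIcc 0 L, (t, x) ∈ U := fun x hx => hUsub ⟨ht, uIcc_of_le hL.le ▸ hx⟩
  constructor
  · have euler : ∀ x ∈ uIcc 0 L, EulerEquationsAt ρ v e (fun z => Rs / cv * e z)
        (lam / (2 * d) * |v (t, x)| * v (t, x))
        (kω / d * (e (t, x) / (cv * ρ (t, x)) - Tinf)) t x := by
      intro x hx
      rw [uIcc_of_le hL.le] at hx
      exact ⟨h1 t ht x hx, h2 t ht x hx, by linear_combination h3 t ht x hx⟩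
    simpa only [energyDensity, specificEnthalpy, intervalIntegral.integral_const_mul] using
      hasDerivAt_integral_energyDensity hU hslice hρ hv he (contDiffOn_const.mul he)
        (fun x hx => (hρpos _ (hslice x hx)).ne') euler
  · intro hk hdpos hT
    have hT_cont : ContinuousOn (fun z => e z / (cv * ρ z)) U :=
      he.continuousOn.div (continuousOn_const.mul hρ.continuousOn)
        fun z hz => (mul_pos hcv (hρpos z hz)).ne'
    linarith [neg_mul_integral_sub_const_le (c := Tinf) hL.le (div_nonneg hk hdpos.le)
      (intervalIntegrable_slice hT_cont hslice) (hT t ht)]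
end
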